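/- Let 1 < p < q be integers and a, b ∈ ℤ with gcd(p,q) | (b − a), and write p = p₁·gcd(p,q), q = q₁·gcd(p,q). Suppose p₁ > 1. Applying the construction with (α,β,γ,δ) = (p,a,q,b), the densities d_i exist for all i ∈ ℕ ∪ {∞}, with d_1 = 1 − 1/p − 1/q + 1/(gcd(p,q)·p₁·q₁), d_i = (q₁ − 1)(p₁ − 1)/(q₁·p·p₁^{i−1}) for every finite i ≥ 2, and d_∞ = 0. -/

import Mathlib

open scoped BigOperators

noncomputable section

/-- The Beatty set `S(τ,η) = {⌊τk+η⌋ : k ∈ ℕ} ∩ ℕ`, viewed as a set of positive integers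
(inside `ℤ`).  Here `ℕ` denotes the positive integers, so `k` ranges over `k ≥ 1`. -/
def BeattySet (τ η : ℝ) : Set ℤ :=
  {x : ℤ | 0 < x ∧ ∃ k : ℕ, 0 < k ∧ ⌊τ * (k : ℝ) + η⌋ = x}

/-- The sets `A_i` (for `1 ≤ i < ∞`) associated to the data `(α,β,γ,δ)` and the map `f`
(which satisfies `f(⌊αk+β⌋) = ⌊γk+δ⌋` for `k ≥ 1`):
`A_1 = ℕ \ (S(α,β) ∪ S(γ,δ))`, and for `i ≥ 2`,
`A_i = {x ∈ S(α,β) \ S(γ,δ) : f^j(x) ∈ S(α,β) ∩ S(γ,δ) for 1 ≤ j ≤ i−2, and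
f^{i−1}(x) ∈ S(γ,δ) \ S(α,β)}`. -/
def ASet (α β γ δ : ℝ) (f : ℤ → ℤ) (i : ℕ) : Set ℤ :=
  if i = 1 then {x : ℤ | 0 < x} \ (BeattySet α β ∪ BeattySet γ δ)
  else (BeattySet α β \ BeattySet γ δ) ∩
    {x : ℤ | (∀ j : ℕ, 1 ≤ j → j ≤ i - 2 → f^[j] x ∈ BeattySet α β ∩ BeattySet γ δ) ∧
      f^[i - 1] x ∈ BeattySet γ δ \ BeattySet α β}

/-- The set `A_∞ = {x ∈ S(α,β) \ S(γ,δ) : f^j(x) ∈ S(α,β) ∩ S(γ,δ) for all j ≥ 1}`. -/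
def AInf (α β γ δ : ℝ) (f : ℤ → ℤ) : Set ℤ :=
  (BeattySet α β \ BeattySet γ δ) ∩
    {x : ℤ | ∀ j : ℕ, 1 ≤ j → f^[j] x ∈ BeattySet α β ∩ BeattySet γ δ}

/-- `A` has (Banach) density `d`: the limit of `|A ∩ [n₁,n₂]| / (n₂ − n₁)` as `n₂ − n₁ → ∞`
over intervals `[n₁,n₂]` of positive integers exists and equals `d`. -/
def HasBanachDensity (A : Set ℤ) (d : ℝ) : Prop :=
  ∀ ε : ℝ, 0 < ε → ∃ N : ℕ, ∀ n₁ n₂ : ℕ, 0 < n₁ → n₁ + N ≤ n₂ →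
    |((A ∩ Set.Icc (n₁ : ℤ) (n₂ : ℤ)).ncard : ℝ) / ((n₂ : ℝ) - (n₁ : ℝ)) - d| < ε

end

/-!
For large `x` everything is decided by congruences. There, `x ∈ S(p,a)` means `x ≡ a (mod p)`, and
`f` is affine with positive slope on this class, so `x, f(x), …, f^n(x) ∈ S(p,a)` is a congruence
condition on large integers; solving `f(p k + a) = q k + b` backwards with `gcd(p₁, q₁) = 1`
shows that it holds on a single residue class modulo `p p₁^n`. By the Chinese remainder theorem,
a proportion `1 - 1/q₁` of that class avoids `S(q,b)`. Then `A_{n+2}` is, up to finitely many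
elements, the difference of two consecutive such sets, and `A_∞` lies in all of them, whose
densities tend to zero.
-/

open Filter Topology

section BanachDensity

/-- The filter on pairs `(n₁, n₂)` expressing that `n₁` is positive and `n₂ - n₁ → ∞`:
Banach densities are limits along it. -/
noncomputable def longIntervals : Filter (ℕ × ℕ) :=
  comap (fun n ↦ (n.2 : ℤ) - n.1) atTop ⊓ 𝓟 {n | 0 < n.1}

/-- The relative frequency of `A` in the interval `[n₁, n₂]`, normalised by `n₂ - n₁` as in
`HasBanachDensity`. -/
noncomputable def intervalRatio (A : Set ℤ) (n : ℕ × ℕ) : ℝ :=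
  (A ∩ Set.Icc (n.1 : ℤ) (n.2 : ℤ)).ncard / ((n.2 : ℝ) - (n.1 : ℝ))

theorem eventually_longIntervals {P : ℕ × ℕ → Prop} :
    (∀ᶠ n in longIntervals, P n) ↔
      ∃ N : ℕ, ∀ n₁ n₂ : ℕ, 0 < n₁ → n₁ + N ≤ n₂ → P (n₁, n₂) := by
  simp only [longIntervals, eventually_inf_principal, eventually_comap, eventually_atTop,
    Set.mem_ofPred_eq]
  constructor
  · rintro ⟨N, hN⟩
    exact ⟨N.toNat, fun n₁ n₂ hpos hlong ↦ hN (n₂ - n₁) (by omega) (n₁, n₂) rfl hpos⟩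
  · rintro ⟨N, hN⟩
    exact ⟨N, fun l hl n hn hpos ↦ hN n.1 n.2 hpos (by omega)⟩

theorem hasBanachDensity_iff_tendsto {A : Set ℤ} {d : ℝ} :
    HasBanachDensity A d ↔ Tendsto (intervalRatio A) longIntervals (𝓝 d) := by
  simp only [Metric.tendsto_nhds, eventually_longIntervals, Real.dist_eq, intervalRatio,
    HasBanachDensity, gt_iff_lt]

theorem eventually_longIntervals_pos_lt : ∀ᶠ n in longIntervals, 0 < n.1 ∧ n.1 < n.2 :=
  eventually_longIntervals.2 ⟨1, fun _ _ hpos hlong ↦ ⟨hpos, by omega⟩⟩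

theorem tendsto_length_longIntervals :
    Tendsto (fun n : ℕ × ℕ ↦ (n.2 : ℝ) - n.1) longIntervals atTop := by
  have hint : Tendsto (fun n : ℕ × ℕ ↦ (n.2 : ℤ) - n.1) longIntervals atTop :=
    tendsto_comap.mono_left inf_le_left
  simpa only [Function.comp_def, Int.cast_sub, Int.cast_natCast] using
    tendsto_intCast_atTop_atTop (R := ℝ).comp hint

theorem hasBanachDensity_of_abs_sub_le {A : Set ℤ} {d C : ℝ}
    (h : ∀ n₁ n₂ : ℕ, 0 < n₁ → n₁ < n₂ →
      |((A ∩ Set.Icc (n₁ : ℤ) (n₂ : ℤ)).ncard : ℝ) - d * ((n₂ : ℝ) - (n₁ : ℝ))| ≤ C) :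
    HasBanachDensity A d := by
  rw [hasBanachDensity_iff_tendsto, tendsto_iff_norm_sub_tendsto_zero]
  refine squeeze_zero' (.of_forall fun _ ↦ norm_nonneg _) ?_
    (tendsto_length_longIntervals.const_div_atTop C)
  filter_upwards [eventually_longIntervals_pos_lt] with n ⟨hpos, hlt⟩
  have hlen : 0 < (n.2 : ℝ) - n.1 := sub_pos.2 (Nat.cast_lt.2 hlt)
  rw [intervalRatio, div_sub' hlen.ne', norm_div, Real.norm_of_nonneg hlen.le, mul_comm]
  gcongr
  exact h n.1 n.2 hpos hlt

theorem HasBanachDensity.sdiff {A B : Set ℤ} {d e : ℝ} (hA : HasBanachDensity A d)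
    (hB : HasBanachDensity B e) (h : B ⊆ A) : HasBanachDensity (A \ B) (d - e) := by
  rw [hasBanachDensity_iff_tendsto] at *
  refine (hA.sub hB).congr fun n ↦ ?_
  have hfin : (A ∩ Set.Icc (n.1 : ℤ) n.2).Finite := (Set.finite_Icc _ _).inter_of_right A
  simp only [intervalRatio]
  rw [Set.inter_sdiff_distrib_right, ← sub_div,
    ← Set.ncard_sdiff_add_ncard_of_subset (Set.inter_subset_inter_left _ h) hfin,
    Nat.cast_add, add_sub_cancel_right]

theorem exists_intervalRatio_le_add {A B : Set ℤ} (h : ∀ᶠ x in atTop, x ∈ A → x ∈ B) :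
    ∃ C : ℝ, ∀ᶠ n in longIntervals,
      intervalRatio A n ≤ intervalRatio B n + C / ((n.2 : ℝ) - n.1) := by
  obtain ⟨M, hM⟩ := eventually_atTop.1 h
  refine ⟨(Set.Icc 1 M).ncard, ?_⟩
  filter_upwards [eventually_longIntervals_pos_lt] with n ⟨hpos, hlt⟩
  have hlen : 0 < (n.2 : ℝ) - n.1 := sub_pos.2 (Nat.cast_lt.2 hlt)
  have hsub : A ∩ Set.Icc (n.1 : ℤ) n.2 ⊆ (B ∩ Set.Icc (n.1 : ℤ) n.2) ∪ Set.Icc 1 M := by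
    rintro x ⟨hxA, hx⟩
    rcases le_total M x with hMx | hxM
    · exact Or.inl ⟨hM x hMx hxA, hx⟩
    · exact Or.inr ⟨by have := hx.1; omega, hxM⟩
  have hcard := (Set.ncard_le_ncard hsub
    (((Set.finite_Icc _ _).inter_of_right B).union (Set.finite_Icc _ _))).trans
    (Set.ncard_union_le _ _)
  rw [intervalRatio, intervalRatio, ← add_div]
  gcongr
  exact_mod_cast hcard

theorem HasBanachDensity.congr {A B : Set ℤ} {d : ℝ} (hB : HasBanachDensity B d)
    (h : ∀ᶠ x in atTop, x ∈ A ↔ x ∈ B) : HasBanachDensity A d := by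
  obtain ⟨C, hC⟩ := exists_intervalRatio_le_add (h.mono fun _ ↦ Iff.mp)
  obtain ⟨C', hC'⟩ := exists_intervalRatio_le_add (h.mono fun _ ↦ Iff.mpr)
  rw [hasBanachDensity_iff_tendsto] at *
  have hlower := hB.sub (tendsto_length_longIntervals.const_div_atTop C')
  have hupper := hB.add (tendsto_length_longIntervals.const_div_atTop C)
  rw [sub_zero] at hlower
  rw [add_zero] at hupper
  exact tendsto_of_tendsto_of_tendsto_of_le_of_le' hlower hupper
    (hC'.mono fun _ ↦ sub_le_iff_le_add.2) hC

theorem hasBanachDensity_zero_of_eventually_subset {A : Set ℤ} {B : ℕ → Set ℤ} {d : ℕ → ℝ}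
    (h : ∀ j, ∀ᶠ x in atTop, x ∈ A → x ∈ B j) (hB : ∀ j, HasBanachDensity (B j) (d j))
    (hd : Tendsto d atTop (𝓝 0)) : HasBanachDensity A 0 := by
  simp only [hasBanachDensity_iff_tendsto] at *
  refine tendsto_order.2 ⟨fun ε hε ↦ ?_, fun ε hε ↦ ?_⟩
  · filter_upwards [eventually_longIntervals_pos_lt] with n ⟨_, hlt⟩
    exact hε.trans_le (div_nonneg (Nat.cast_nonneg _) (sub_nonneg.2 (Nat.cast_le.2 hlt.le)))
  · obtain ⟨j, hj⟩ := (hd.eventually_lt_const hε).exists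
    obtain ⟨C, hC⟩ := exists_intervalRatio_le_add (h j)
    have hupper := (hB j).add (tendsto_length_longIntervals.const_div_atTop C)
    rw [add_zero] at hupper
    filter_upwards [hC, hupper.eventually_lt_const hj] with n hle hlt using hle.trans_lt hlt

end BanachDensity

section ResidueClass

/-- The residue class of `r` modulo `m`. -/
def residueClass (m r : ℤ) : Set ℤ := {x | m ∣ x - r}

theorem mem_residueClass {m r x : ℤ} : x ∈ residueClass m r ↔ m ∣ x - r := Iff.rfl

theorem mem_residueClass_iff_exists {m r x : ℤ} : x ∈ residueClass m r ↔ ∃ k, x = m * k + r := by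
  simp only [mem_residueClass, dvd_def, sub_eq_iff_eq_add]

theorem ncard_residueClass_inter_Icc {m : ℤ} (hm : 0 < m) (r n₁ n₂ : ℤ) :
    ((residueClass m r ∩ Set.Icc n₁ n₂).ncard : ℤ) =
      max (⌈((n₂ + 1 : ℤ) - r) / (m : ℚ)⌉ - ⌈(n₁ - r) / (m : ℚ)⌉) 0 := by
  rw [← Int.Ico_filter_modEq_card _ _ hm, ← Set.ncard_coe_finset]
  congr 2
  ext x
  simp only [Set.mem_inter_iff, mem_residueClass, Set.mem_Icc, Finset.coe_filter, Finset.mem_Ico,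
    Set.mem_ofPred_eq, Int.lt_add_one_iff, Int.modEq_iff_dvd, dvd_sub_comm (a := m) (b := x),
    and_comm]

theorem hasBanachDensity_residueClass {m : ℤ} (hm : 0 < m) (r : ℤ) :
    HasBanachDensity (residueClass m r) (1 / m) := by
  refine hasBanachDensity_of_abs_sub_le (C := 2) fun n₁ n₂ _ hlt ↦ ?_
  have hcard := ncard_residueClass_inter_Icc hm r n₁ n₂
  set u : ℚ := ((n₂ + 1 : ℤ) - r) / m with hu
  set v : ℚ := ((n₁ : ℤ) - r) / m with hv
  have hm' : (1 : ℚ) ≤ m := by exact_mod_cast hm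
  have hinv : 1 / (m : ℚ) ≤ 1 := (div_le_one (by positivity)).2 hm'
  have huv : u - v = 1 / m * (n₂ - n₁) + 1 / m := by rw [hu, hv]; push_cast; ring
  have hvu : v ≤ u := by
    rw [hu, hv]
    gcongr
    omega
  rw [max_eq_left (sub_nonneg.2 (Int.ceil_le_ceil hvu))] at hcard
  have hcard' : ((residueClass m r ∩ Set.Icc (n₁ : ℤ) n₂).ncard : ℚ) = ⌈u⌉ - ⌈v⌉ := by
    exact_mod_cast hcard
  have hbound :
      |((residueClass m r ∩ Set.Icc (n₁ : ℤ) n₂).ncard : ℚ) - 1 / m * (n₂ - n₁)| ≤ 2 := by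
    have : 0 < 1 / (m : ℚ) := by positivity
    rw [hcard', abs_le]
    constructor <;>
      linarith [Int.le_ceil u, Int.le_ceil v, Int.ceil_lt_add_one u, Int.ceil_lt_add_one v]
  exact_mod_cast hbound

theorem mul_mul_dvd_of_isCoprime {g m n y : ℤ} (hmn : IsCoprime m n) (hm : m * g ∣ y)
    (hn : n * g ∣ y) : m * n * g ∣ y := by
  obtain ⟨u, v, huv⟩ := hmn
  obtain ⟨s, rfl⟩ := hm
  obtain ⟨t, ht⟩ := hn
  exact ⟨u * t + v * s, by linear_combination m * u * ht - m * g * s * huv⟩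

theorem exists_residueClass_inter_eq {g m n r s : ℤ} (hmn : IsCoprime m n) (hrs : g ∣ r - s) :
    ∃ w, residueClass (m * g) r ∩ residueClass (n * g) s = residueClass (m * n * g) w := by
  obtain ⟨u, v, huv⟩ := id hmn
  obtain ⟨e, he⟩ := hrs
  refine ⟨r - m * u * g * e, Set.ext fun x ↦ ?_⟩
  have hr : m * g ∣ x - (r - m * u * g * e) ↔ m * g ∣ x - r := by
    rw [show x - (r - m * u * g * e) = x - r + m * g * (u * e) by ring]
    exact dvd_add_left (dvd_mul_right _ _)
  have hs : n * g ∣ x - (r - m * u * g * e) ↔ n * g ∣ x - s := by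
    rw [show x - (r - m * u * g * e) = x - s - n * g * (v * e) by
      linear_combination g * e * huv - he]
    exact dvd_sub_left (dvd_mul_right _ _)
  simp only [Set.mem_inter_iff, mem_residueClass, ← hr, ← hs]
  exact ⟨fun h ↦ mul_mul_dvd_of_isCoprime hmn h.1 h.2,
    fun h ↦ ⟨.trans ⟨n, by ring⟩ h, .trans ⟨m, by ring⟩ h⟩⟩

theorem exists_dvd_mul_add_iff {m u : ℤ} (hmu : IsCoprime m u) (v : ℤ) :
    ∃ t, ∀ k, m ∣ u * k + v ↔ m ∣ k - t := by
  obtain ⟨y, z, hyz⟩ := id hmu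
  refine ⟨-z * v, fun k ↦ ?_⟩
  have hdvd : m ∣ u * (k - -z * v) ↔ m ∣ k - -z * v :=
    ⟨hmu.dvd_of_dvd_mul_left, fun h ↦ h.mul_left u⟩
  rw [← hdvd, show u * k + v = u * (k - -z * v) + m * (y * v) by linear_combination -v * hyz]
  exact dvd_add_left (dvd_mul_right _ _)

end ResidueClass

section Chains

/-- The map `f` of the construction for `(α, β, γ, δ) = (p, a, q, b)`, sending `p * k + a` to
`q * k + b`, extended to all of `ℤ` by rounding `(x - a) / p` down. -/
def beattyMap (p q a b x : ℤ) : ℤ := q * ((x - a) / p) + b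

/-- The integers whose iterates of order `0, …, n` under `beattyMap` all lie in the residue class
of `a` modulo `p`. Up to finitely many positive integers, these are the `x ∈ S(p, a)` with
`f^j(x) ∈ S(p, a) ∩ S(q, b)` for `1 ≤ j ≤ n`. -/
def chainSet (p q a b : ℤ) (n : ℕ) : Set ℤ :=
  {x | ∀ j ≤ n, (beattyMap p q a b)^[j] x ∈ residueClass p a}

variable {p q a b : ℤ}

theorem beattyMap_mul_add (hp : p ≠ 0) (k : ℤ) : beattyMap p q a b (p * k + a) = q * k + b := by
  rw [beattyMap, add_sub_cancel_right, Int.mul_ediv_cancel_left _ hp]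

theorem beattyMap_mem_residueClass (x : ℤ) : beattyMap p q a b x ∈ residueClass q b :=
  mem_residueClass_iff_exists.2 ⟨_, rfl⟩

theorem tendsto_beattyMap_atTop (hp : 0 < p) (hq : 0 < q) :
    Tendsto (beattyMap p q a b) atTop atTop := by
  have hdiv : Tendsto (fun x : ℤ ↦ (x - a) / p) atTop atTop :=
    tendsto_atTop.2 fun c ↦ (eventually_ge_atTop (c * p + a)).mono fun x hx ↦
      (Int.le_ediv_iff_mul_le hp).2 (by linarith)
  exact tendsto_atTop_add_const_right _ _ (hdiv.const_mul_atTop' hq)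

theorem chainSet_zero : chainSet p q a b 0 = residueClass p a := by
  simp only [chainSet, Nat.le_zero, forall_eq, Function.iterate_zero, id, Set.ofPred_mem_eq]

theorem chainSet_succ (n : ℕ) :
    chainSet p q a b (n + 1) =
      chainSet p q a b n ∩ (beattyMap p q a b)^[n + 1] ⁻¹' residueClass p a := by
  ext x
  simp only [chainSet, ← Nat.lt_add_one_iff, Set.mem_ofPred_eq, Set.mem_inter_iff,
    Set.mem_preimage, Nat.forall_lt_succ_right (n := n + 1)]

theorem chainSet_succ' (n : ℕ) :
    chainSet p q a b (n + 1) =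
      residueClass p a ∩ beattyMap p q a b ⁻¹' chainSet p q a b n := by
  ext x
  simp only [chainSet, ← Nat.lt_add_one_iff, Set.mem_ofPred_eq, Set.mem_inter_iff,
    Set.mem_preimage, Nat.forall_lt_succ_left (n := n + 1), Function.iterate_succ_apply,
    Function.iterate_zero_apply]

theorem chainSet_succ_subset (n : ℕ) : chainSet p q a b (n + 1) ⊆ chainSet p q a b n := by
  rw [chainSet_succ]
  exact Set.inter_subset_left

end Chains

section ChainDensity

variable {p₁ q₁ g a b : ℤ}

theorem exists_chainSet_eq_residueClass (hg : g ≠ 0) (hp₁ : p₁ ≠ 0) (hcop : IsCoprime p₁ q₁)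
    (hab : g ∣ b - a) (n : ℕ) :
    ∃ s, g ∣ s - a ∧
      chainSet (p₁ * g) (q₁ * g) a b n = residueClass (p₁ ^ (n + 1) * g) s := by
  induction n with
  | zero => exact ⟨a, by simp, by rw [chainSet_zero, zero_add, pow_one]⟩
  | succ n ih =>
    obtain ⟨s, hsa, hs⟩ := ih
    obtain ⟨e, he⟩ : g ∣ b - s := by simpa using dvd_sub hab hsa
    obtain ⟨t, ht⟩ := exists_dvd_mul_add_iff (hcop.pow_left (m := n + 1)) e
    have hstep (k : ℤ) : q₁ * g * k + b ∈ residueClass (p₁ ^ (n + 1) * g) s ↔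
        p₁ ^ (n + 1) ∣ k - t := by
      rw [← ht, ← mul_dvd_mul_iff_right hg, mem_residueClass]
      congr! 1
      linear_combination he
    refine ⟨p₁ * g * t + a, ⟨p₁ * t, by ring⟩, ?_⟩
    have hpg : p₁ * g ≠ 0 := mul_ne_zero hp₁ hg
    have hmod : p₁ ^ (n + 1 + 1) * g = p₁ * g * p₁ ^ (n + 1) := by ring
    ext x
    rw [chainSet_succ', hs, Set.mem_inter_iff, Set.mem_preimage, mem_residueClass_iff_exists, hmod]
    constructor
    · rintro ⟨⟨k, rfl⟩, hk⟩
      rw [beattyMap_mul_add hpg, hstep] at hk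
      obtain ⟨l, hl⟩ := hk
      exact ⟨l, by linear_combination p₁ * g * hl⟩
    · rintro ⟨l, hl⟩
      obtain rfl : x = p₁ * g * (p₁ ^ (n + 1) * l + t) + a := by linear_combination hl
      refine ⟨⟨_, rfl⟩, ?_⟩
      rw [beattyMap_mul_add hpg, hstep, add_sub_cancel_right]
      exact dvd_mul_right _ _

theorem hasBanachDensity_chainSet_sdiff (hg : 0 < g) (hp₁ : 0 < p₁) (hq₁ : 0 < q₁)
    (hcop : IsCoprime p₁ q₁) (hab : g ∣ b - a) (n : ℕ) :
    HasBanachDensity (chainSet (p₁ * g) (q₁ * g) a b n \ residueClass (q₁ * g) b)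
      ((q₁ - 1) / (q₁ * g * p₁ ^ (n + 1))) := by
  obtain ⟨s, hsa, hs⟩ := exists_chainSet_eq_residueClass hg.ne' hp₁.ne' hcop hab n
  have hsb : g ∣ s - b := by simpa using dvd_sub hsa hab
  obtain ⟨w, hw⟩ := exists_residueClass_inter_eq (hcop.pow_left (m := n + 1)) hsb
  have hdens := (hasBanachDensity_residueClass (m := p₁ ^ (n + 1) * g) (by positivity) s).sdiff
    (hw ▸ hasBanachDensity_residueClass (m := p₁ ^ (n + 1) * q₁ * g) (by positivity) w)
    Set.inter_subset_left
  rw [Set.sdiff_self_inter] at hdens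
  rw [hs]
  convert hdens using 1
  have hg₀ : (g : ℝ) ≠ 0 := by exact_mod_cast hg.ne'
  have hq₀ : (q₁ : ℝ) ≠ 0 := by exact_mod_cast hq₁.ne'
  push_cast
  field_simp

end ChainDensity

section Orbits

variable {α β γ δ : ℝ} {p q a b : ℤ} {f : ℤ → ℤ}

theorem eventually_iterate_eq (hp : 0 < p) (hq : 0 < q)
    (hf : ∀ᶠ x in atTop, x ∈ residueClass p a → f x = beattyMap p q a b x) (n : ℕ) :
    ∀ᶠ x in atTop, x ∈ chainSet p q a b n → f^[n + 1] x = (beattyMap p q a b)^[n + 1] x := by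
  induction n with
  | zero => simpa only [chainSet_zero, zero_add, Function.iterate_one] using hf
  | succ n ih =>
    have htendsto := (tendsto_beattyMap_atTop (a := a) (b := b) hp hq).iterate (n + 1)
    filter_upwards [ih, htendsto.eventually hf] with x hiter hlast hx
    rw [chainSet_succ] at hx
    rw [Function.iterate_succ_apply', hiter hx.1, hlast hx.2,
      ← Function.iterate_succ_apply' (beattyMap p q a b)]

theorem eventually_iterate_mem_iff (hp : 0 < p) (hq : 0 < q)
    (hS : ∀ᶠ x in atTop, x ∈ BeattySet α β ↔ x ∈ residueClass p a)
    (hT : ∀ᶠ x in atTop, x ∈ BeattySet γ δ ↔ x ∈ residueClass q b)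
    (hf : ∀ᶠ x in atTop, x ∈ residueClass p a → f x = beattyMap p q a b x) (n : ℕ) :
    ∀ᶠ x in atTop, x ∈ chainSet p q a b n → f^[n + 1] x ∈ BeattySet γ δ ∧
      (f^[n + 1] x ∈ BeattySet α β ↔ x ∈ chainSet p q a b (n + 1)) := by
  have htendsto := (tendsto_beattyMap_atTop (a := a) (b := b) hp hq).iterate (n + 1)
  filter_upwards [eventually_iterate_eq hp hq hf n, htendsto.eventually hS,
    htendsto.eventually hT] with x hiter hxS hxT hx
  rw [hiter hx, hxS, hxT, chainSet_succ, Function.iterate_succ_apply']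
  exact ⟨beattyMap_mem_residueClass _, by
    simp only [Set.mem_inter_iff, hx, Set.mem_preimage, Function.iterate_succ_apply', true_and]⟩

theorem eventually_orbit_mem_iff (hp : 0 < p) (hq : 0 < q)
    (hS : ∀ᶠ x in atTop, x ∈ BeattySet α β ↔ x ∈ residueClass p a)
    (hT : ∀ᶠ x in atTop, x ∈ BeattySet γ δ ↔ x ∈ residueClass q b)
    (hf : ∀ᶠ x in atTop, x ∈ residueClass p a → f x = beattyMap p q a b x) (n : ℕ) :
    ∀ᶠ x in atTop, (x ∈ BeattySet α β ∧
        ∀ j, 1 ≤ j → j ≤ n → f^[j] x ∈ BeattySet α β ∩ BeattySet γ δ) ↔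
      x ∈ chainSet p q a b n := by
  induction n with
  | zero =>
    filter_upwards [hS] with x hx
    rw [hx, chainSet_zero]
    exact and_iff_left fun j h1 h0 ↦ by omega
  | succ n ih =>
    filter_upwards [ih, eventually_iterate_mem_iff hp hq hS hT hf n] with x hchain hnext
    have hsplit : (∀ j, 1 ≤ j → j ≤ n + 1 → f^[j] x ∈ BeattySet α β ∩ BeattySet γ δ) ↔
        (∀ j, 1 ≤ j → j ≤ n → f^[j] x ∈ BeattySet α β ∩ BeattySet γ δ) ∧
          f^[n + 1] x ∈ BeattySet α β ∩ BeattySet γ δ := by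
      grind
    rw [hsplit, ← and_assoc, hchain, Set.mem_inter_iff]
    exact ⟨fun ⟨hx, hmem, _⟩ ↦ (hnext hx).2.1 hmem, fun hx ↦
      have hx' := chainSet_succ_subset n hx
      ⟨hx', (hnext hx').2.2 hx, (hnext hx').1⟩⟩

theorem eventually_mem_aSet_one_iff
    (hS : ∀ᶠ x in atTop, x ∈ BeattySet α β ↔ x ∈ residueClass p a)
    (hT : ∀ᶠ x in atTop, x ∈ BeattySet γ δ ↔ x ∈ residueClass q b) :
    ∀ᶠ x in atTop, x ∈ ASet α β γ δ f 1 ↔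
      x ∈ (Set.univ \ residueClass q b) \ (residueClass p a \ residueClass q b) := by
  filter_upwards [hS, hT, eventually_gt_atTop 0] with x hxS hxT hpos
  have hpos' : x ∈ {y : ℤ | 0 < y} := hpos
  simp only [ASet, if_true, Set.mem_sdiff, Set.mem_union, Set.mem_univ, hpos', hxS, hxT]
  tauto

theorem eventually_mem_aSet_add_two_iff (hp : 0 < p) (hq : 0 < q)
    (hS : ∀ᶠ x in atTop, x ∈ BeattySet α β ↔ x ∈ residueClass p a)
    (hT : ∀ᶠ x in atTop, x ∈ BeattySet γ δ ↔ x ∈ residueClass q b)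
    (hf : ∀ᶠ x in atTop, x ∈ residueClass p a → f x = beattyMap p q a b x) (n : ℕ) :
    ∀ᶠ x in atTop, x ∈ ASet α β γ δ f (n + 2) ↔
      x ∈ (chainSet p q a b n \ residueClass q b) \
        (chainSet p q a b (n + 1) \ residueClass q b) := by
  filter_upwards [hT, eventually_orbit_mem_iff hp hq hS hT hf n,
    eventually_iterate_mem_iff hp hq hS hT hf n] with x hxT hchain hnext
  rw [ASet, if_neg (by omega), Nat.add_sub_cancel, show n + 2 - 1 = n + 1 from rfl]
  simp only [Set.mem_inter_iff, Set.mem_sdiff, Set.mem_ofPred_eq, hxT] at hchain ⊢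
  tauto

theorem eventually_mem_of_mem_aInf (hp : 0 < p) (hq : 0 < q)
    (hS : ∀ᶠ x in atTop, x ∈ BeattySet α β ↔ x ∈ residueClass p a)
    (hT : ∀ᶠ x in atTop, x ∈ BeattySet γ δ ↔ x ∈ residueClass q b)
    (hf : ∀ᶠ x in atTop, x ∈ residueClass p a → f x = beattyMap p q a b x) (n : ℕ) :
    ∀ᶠ x in atTop, x ∈ AInf α β γ δ f → x ∈ chainSet p q a b n \ residueClass q b := by
  filter_upwards [hT, eventually_orbit_mem_iff hp hq hS hT hf n] with x hxT hchain
  rintro ⟨⟨hxS, hxT'⟩, horbit⟩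
  exact ⟨hchain.1 ⟨hxS, fun j hj _ ↦ horbit j hj⟩, hxT'.imp hxT.2⟩

end Orbits

section Densities

variable {α β γ δ : ℝ} {p₁ q₁ g a b : ℤ} {f : ℤ → ℤ}

theorem hasBanachDensity_aSet_one (hg : 0 < g) (hp₁ : 0 < p₁) (hq₁ : 0 < q₁)
    (hcop : IsCoprime p₁ q₁) (hab : g ∣ b - a)
    (hS : ∀ᶠ x in atTop, x ∈ BeattySet α β ↔ x ∈ residueClass (p₁ * g) a)
    (hT : ∀ᶠ x in atTop, x ∈ BeattySet γ δ ↔ x ∈ residueClass (q₁ * g) b) :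
    HasBanachDensity (ASet α β γ δ f 1)
      (1 - 1 / (p₁ * g) - 1 / (q₁ * g) + 1 / (g * p₁ * q₁)) := by
  have huniv : HasBanachDensity Set.univ 1 := by
    simpa only [residueClass, one_dvd, Set.ofPred_true, Int.cast_one, div_one] using
      hasBanachDensity_residueClass one_pos 0
  have hchain := hasBanachDensity_chainSet_sdiff hg hp₁ hq₁ hcop hab 0
  rw [chainSet_zero] at hchain
  have hdens := (huniv.sdiff (hasBanachDensity_residueClass (mul_pos hq₁ hg) b)
    (Set.subset_univ _)).sdiff hchain (Set.sdiff_subset_sdiff_left (Set.subset_univ _))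
  convert hdens.congr (eventually_mem_aSet_one_iff hS hT) using 1
  have hp₀ : (p₁ : ℝ) ≠ 0 := by exact_mod_cast hp₁.ne'
  have hq₀ : (q₁ : ℝ) ≠ 0 := by exact_mod_cast hq₁.ne'
  have hg₀ : (g : ℝ) ≠ 0 := by exact_mod_cast hg.ne'
  push_cast
  field_simp
  ring

theorem hasBanachDensity_aSet_add_two (hg : 0 < g) (hp₁ : 0 < p₁) (hq₁ : 0 < q₁)
    (hcop : IsCoprime p₁ q₁) (hab : g ∣ b - a)
    (hS : ∀ᶠ x in atTop, x ∈ BeattySet α β ↔ x ∈ residueClass (p₁ * g) a)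
    (hT : ∀ᶠ x in atTop, x ∈ BeattySet γ δ ↔ x ∈ residueClass (q₁ * g) b)
    (hf : ∀ᶠ x in atTop, x ∈ residueClass (p₁ * g) a →
      f x = beattyMap (p₁ * g) (q₁ * g) a b x) (n : ℕ) :
    HasBanachDensity (ASet α β γ δ f (n + 2))
      ((q₁ - 1) * (p₁ - 1) / (q₁ * (p₁ * g) * p₁ ^ (n + 1))) := by
  have hchain := hasBanachDensity_chainSet_sdiff hg hp₁ hq₁ hcop hab
  have hdens := (hchain n).sdiff (hchain (n + 1))
    (Set.sdiff_subset_sdiff_left (chainSet_succ_subset n))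
  convert hdens.congr (eventually_mem_aSet_add_two_iff (mul_pos hp₁ hg) (mul_pos hq₁ hg)
    hS hT hf n) using 1
  have hp₀ : (p₁ : ℝ) ≠ 0 := by exact_mod_cast hp₁.ne'
  have hq₀ : (q₁ : ℝ) ≠ 0 := by exact_mod_cast hq₁.ne'
  have hg₀ : (g : ℝ) ≠ 0 := by exact_mod_cast hg.ne'
  field_simp
  ring

theorem hasBanachDensity_aInf_zero (hg : 0 < g) (hp₁ : 1 < p₁) (hq₁ : 0 < q₁)
    (hcop : IsCoprime p₁ q₁) (hab : g ∣ b - a)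
    (hS : ∀ᶠ x in atTop, x ∈ BeattySet α β ↔ x ∈ residueClass (p₁ * g) a)
    (hT : ∀ᶠ x in atTop, x ∈ BeattySet γ δ ↔ x ∈ residueClass (q₁ * g) b)
    (hf : ∀ᶠ x in atTop, x ∈ residueClass (p₁ * g) a →
      f x = beattyMap (p₁ * g) (q₁ * g) a b x) :
    HasBanachDensity (AInf α β γ δ f) 0 := by
  have hp₁' : 0 < p₁ := one_pos.trans hp₁
  refine hasBanachDensity_zero_of_eventually_subset
    (eventually_mem_of_mem_aInf (mul_pos hp₁' hg) (mul_pos hq₁ hg) hS hT hf)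
    (hasBanachDensity_chainSet_sdiff hg hp₁' hq₁ hcop hab) ?_
  have hpow : Tendsto (fun n : ℕ ↦ (p₁ : ℝ) ^ (n + 1)) atTop atTop :=
    (tendsto_pow_atTop_atTop_of_one_lt (by exact_mod_cast hp₁)).comp (tendsto_add_atTop_nat 1)
  have hqg : (0 : ℝ) < q₁ * g := by exact_mod_cast mul_pos hq₁ hg
  exact (hpow.const_mul_atTop hqg).const_div_atTop _

end Densities

section IntegerBeattySets

theorem floor_natCast_mul_add_intCast (p k : ℕ) (a : ℤ) : ⌊(p : ℝ) * k + a⌋ = (p : ℤ) * k + a := by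
  exact_mod_cast Int.floor_intCast (R := ℝ) (p * k + a)

theorem mem_residueClass_iff_exists_pos {p a x : ℤ} (hp : 0 < p) (hx : a < x) :
    x ∈ residueClass p a ↔ ∃ k : ℕ, 0 < k ∧ p * k + a = x := by
  rw [mem_residueClass_iff_exists]
  constructor
  · rintro ⟨k, rfl⟩
    have hk : 0 < k := pos_of_mul_pos_right (lt_add_iff_pos_left a |>.1 hx) hp.le
    lift k to ℕ using hk.le
    exact ⟨k, Nat.cast_pos.1 hk, rfl⟩
  · rintro ⟨k, _, rfl⟩
    exact ⟨k, rfl⟩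

theorem eventually_mem_beattySet_iff {p : ℕ} (hp : 0 < p) (a : ℤ) :
    ∀ᶠ x in atTop, x ∈ BeattySet p a ↔ x ∈ residueClass p a := by
  filter_upwards [eventually_gt_atTop 0, eventually_gt_atTop a] with x hpos hax
  rw [mem_residueClass_iff_exists_pos (Nat.cast_pos.2 hp) hax]
  simp only [BeattySet, floor_natCast_mul_add_intCast, Set.mem_ofPred_eq, hpos, true_and]

theorem eventually_eq_beattyMap {p q : ℕ} {a b : ℤ} {f : ℤ → ℤ} (hp : 0 < p)
    (hf : ∀ k : ℕ, 0 < k → f ⌊(p : ℝ) * k + a⌋ = ⌊(q : ℝ) * k + b⌋) :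
    ∀ᶠ x in atTop, x ∈ residueClass p a → f x = beattyMap p q a b x := by
  filter_upwards [eventually_gt_atTop a] with x hax hx
  obtain ⟨k, hk, rfl⟩ := (mem_residueClass_iff_exists_pos (Nat.cast_pos.2 hp) hax).1 hx
  rw [beattyMap_mul_add (Nat.cast_ne_zero.2 hp.ne'), ← floor_natCast_mul_add_intCast, hf k hk,
    floor_natCast_mul_add_intCast]

end IntegerBeattySets

theorem densities_integer_case_ten_general (p q : ℕ) (hq : 0 < q) (a b : ℤ)
    (hdvd : (Nat.gcd p q : ℤ) ∣ b - a) (p₁ q₁ : ℕ)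
    (hp₁ : p = p₁ * Nat.gcd p q) (hq₁ : q = q₁ * Nat.gcd p q) (hp₁gt : 1 < p₁)
    (f : ℤ → ℤ)
    (hf : ∀ k : ℕ, 0 < k →
      f ⌊(p : ℝ) * (k : ℝ) + (a : ℝ)⌋ = ⌊(q : ℝ) * (k : ℝ) + (b : ℝ)⌋) :
    HasBanachDensity (ASet (p : ℝ) (a : ℝ) (q : ℝ) (b : ℝ) f 1)
        (1 - 1 / (p : ℝ) - 1 / (q : ℝ) +
          1 / ((Nat.gcd p q : ℝ) * (p₁ : ℝ) * (q₁ : ℝ))) ∧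
      (∀ i : ℕ, 2 ≤ i →
        HasBanachDensity (ASet (p : ℝ) (a : ℝ) (q : ℝ) (b : ℝ) f i)
          (((q₁ : ℝ) - 1) * ((p₁ : ℝ) - 1) / ((q₁ : ℝ) * (p : ℝ) * (p₁ : ℝ) ^ (i - 1)))) ∧
      HasBanachDensity (AInf (p : ℝ) (a : ℝ) (q : ℝ) (b : ℝ) f) 0 := by
  have hg : 0 < Nat.gcd p q := Nat.gcd_pos_of_pos_right p hq
  have hp : 0 < p := hp₁ ▸ Nat.mul_pos (by omega) hg
  have hcop : IsCoprime (p₁ : ℤ) q₁ := by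
    have hgcd : Nat.gcd p₁ q₁ * Nat.gcd p q = Nat.gcd p q := by
      rw [← Nat.gcd_mul_right, ← hp₁, ← hq₁]
    exact Nat.isCoprime_iff_coprime.2 ((Nat.mul_eq_right hg.ne').1 hgcd)
  have hS := eventually_mem_beattySet_iff hp a
  have hT := eventually_mem_beattySet_iff hq b
  have hmap := eventually_eq_beattyMap hp hf
  generalize Nat.gcd p q = g at *
  subst hp₁ hq₁
  have hq₁ : 0 < q₁ := Nat.pos_of_mul_pos_right hq
  zify at hg hp₁gt hq₁
  push_cast at *
  refine ⟨?_, fun i hi ↦ ?_, ?_⟩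
  · simpa only [Int.cast_natCast] using
      hasBanachDensity_aSet_one hg (one_pos.trans hp₁gt) hq₁ hcop hdvd hS hT
  · obtain ⟨n, rfl⟩ := Nat.exists_eq_add_of_le' hi
    simpa only [Int.cast_natCast, Nat.add_succ_sub_one] using
      hasBanachDensity_aSet_add_two hg (one_pos.trans hp₁gt) hq₁ hcop hdvd hS hT hmap n
  · exact hasBanachDensity_aInf_zero hg hp₁gt hq₁ hcop hdvd hS hT hmap

/-- **Corollary, region ⟨10⟩.** Let `1 < p < q` be integers, `a, b ∈ ℤ` with
`gcd(p,q) ∣ (b − a)`, and write `p = p₁·gcd(p,q)`, `q = q₁·gcd(p,q)` with `p₁ > 1`.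
With `(α,β,γ,δ) = (p,a,q,b)`, the densities exist, with
`d_1 = 1 − 1/p − 1/q + 1/(gcd(p,q)·p₁·q₁)`,
`d_i = (q₁ − 1)(p₁ − 1)/(q₁·p·p₁^{i−1})` for every finite `i ≥ 2`, and `d_∞ = 0`. -/
theorem densities_integer_case_ten (p q : ℕ) (hp : 1 < p) (hpq : p < q) (a b : ℤ)
    (hdvd : ((Nat.gcd p q : ℤ) ∣ (b - a))) (p₁ q₁ : ℕ)
    (hp₁ : p = p₁ * Nat.gcd p q) (hq₁ : q = q₁ * Nat.gcd p q) (hp₁gt : 1 < p₁)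
    (f : ℤ → ℤ)
    (hf : ∀ k : ℕ, 0 < k →
      f ⌊(p : ℝ) * (k : ℝ) + (a : ℝ)⌋ = ⌊(q : ℝ) * (k : ℝ) + (b : ℝ)⌋) :
    HasBanachDensity (ASet (p : ℝ) (a : ℝ) (q : ℝ) (b : ℝ) f 1)
        (1 - 1 / (p : ℝ) - 1 / (q : ℝ) +
          1 / ((Nat.gcd p q : ℝ) * (p₁ : ℝ) * (q₁ : ℝ))) ∧
      (∀ i : ℕ, 2 ≤ i →
        HasBanachDensity (ASet (p : ℝ) (a : ℝ) (q : ℝ) (b : ℝ) f i)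
          (((q₁ : ℝ) - 1) * ((p₁ : ℝ) - 1) / ((q₁ : ℝ) * (p : ℝ) * (p₁ : ℝ) ^ (i - 1)))) ∧
      HasBanachDensity (AInf (p : ℝ) (a : ℝ) (q : ℝ) (b : ℝ) f) 0 := by
  exact densities_integer_case_ten_general p q (by omega) a b hdvd p₁ q₁ hp₁ hq₁ hp₁gt f hf
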